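/- arXiv:2110.06174 — 2 statements merged into one kernel-verified Lean document; each statement's English description precedes it below -/
import Mathlib

section
/- Let γ be a T-periodic solution of the Hamiltonian system ẋ = J∇Γ(x) and let S be a 2n×2n real orthogonal matrix with SJ = JS, Γ(Sx) = Γ(x) for all x, and γ(s + T/N) = S γ(s) for all s, for some N ∈ ℕ, N ≥ 1. Let Y : ℝ → M_{2n}(ℝ) satisfy Y′(s) = J·D²Γ(γ(s))·Y(s) with Y(0) = Y₀ invertible. Then Y(s + T/N) = S Y(s) Y₀⁻¹ Sᵀ Y(T/N) for all s, and consequently Y(kT/N) = Sᵏ Y₀ (Y₀⁻¹ Sᵀ Y(T/N))ᵏ for every k ∈ ℕ. -/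
open Matrix

/-- The standard `2n × 2n` symplectic matrix `J = [[0, I],[−I, 0]]`, with the index set
`Fin n ⊕ Fin n` (first summand: configuration coordinates, second: momenta). -/
def stdJ (n : ℕ) : Matrix (Fin n ⊕ Fin n) (Fin n ⊕ Fin n) ℝ :=
  Matrix.fromBlocks 0 1 (-1) 0

/-- The gradient of `f : ℝ^ι → ℝ` at `x`, componentwise via the Fréchet derivative. -/
noncomputable def gradV {ι : Type} [Fintype ι] [DecidableEq ι]
    (f : (ι → ℝ) → ℝ) (x : ι → ℝ) : ι → ℝ :=
  fun i => fderiv ℝ f x (Pi.single i 1)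

/-- The Hessian matrix `D²f(x)` of `f : ℝ^ι → ℝ` at `x`. -/
noncomputable def hessM {ι : Type} [Fintype ι] [DecidableEq ι]
    (f : (ι → ℝ) → ℝ) (x : ι → ℝ) : Matrix ι ι ℝ :=
  Matrix.of fun i j => fderiv ℝ (fun y => fderiv ℝ f y (Pi.single j 1)) x (Pi.single i 1)

section Helpers

attribute [local instance] Matrix.linftyOpNormedAddCommGroup

/-- Uniqueness for linear vector ODEs with continuous coefficients. -/
theorem linODE_unique {ι : Type} [Fintype ι] [DecidableEq ι] (A : ℝ → Matrix ι ι ℝ)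
    (hA : Continuous A) (f g : ℝ → ι → ℝ)
    (hf : ∀ t, HasDerivAt f ((A t).mulVec (f t)) t)
    (hg : ∀ t, HasDerivAt g ((A t).mulVec (g t)) t)
    (h0 : f 0 = g 0) (s : ℝ) : f s = g s := by
  have hc : Continuous (fun t => ‖A t‖) := hA.norm
  obtain ⟨K, hK⟩ := (isCompact_Icc (a := -(|s| + 1)) (b := |s| + 1)).bddAbove_image
    hc.continuousOn
  have hlip : ∀ t ∈ Set.Ioo (-(|s| + 1)) (|s| + 1),
      LipschitzOnWith (Real.toNNReal K) (fun x => (A t).mulVec x) Set.univ := by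
    intro t ht
    have hAK : ‖A t‖ ≤ K := hK ⟨t, Set.Ioo_subset_Icc_self ht, rfl⟩
    refine LipschitzOnWith.of_dist_le_mul fun x _ y _ => ?_
    rw [dist_eq_norm, dist_eq_norm, ← Matrix.mulVec_sub]
    refine (Matrix.linfty_opNorm_mulVec _ _).trans ?_
    exact mul_le_mul_of_nonneg_right (hAK.trans (Real.le_coe_toNNReal K)) (norm_nonneg _)
  have hs := abs_nonneg s
  have h1 := neg_abs_le s
  have h2 := le_abs_self s
  exact ODE_solution_unique_of_mem_Ioo (v := fun t x => (A t).mulVec x) (s := fun _ => Set.univ)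
    (t₀ := 0) hlip ⟨by linarith, by linarith⟩
    (fun t _ => ⟨hf t, trivial⟩) (fun t _ => ⟨hg t, trivial⟩) h0 ⟨by linarith, by linarith⟩

/-- Uniqueness for linear matrix ODEs, with entrywise derivatives. -/
theorem linODE_matrix_unique {ι : Type} [Fintype ι] [DecidableEq ι] (A : ℝ → Matrix ι ι ℝ)
    (hA : Continuous A) (X Z : ℝ → Matrix ι ι ℝ)
    (hX : ∀ t i j, HasDerivAt (fun u => X u i j) ((A t * X t) i j) t)
    (hZ : ∀ t i j, HasDerivAt (fun u => Z u i j) ((A t * Z t) i j) t)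
    (h0 : X 0 = Z 0) (s : ℝ) : X s = Z s := by
  ext i j
  have := linODE_unique A hA (fun t i => X t i j) (fun t i => Z t i j)
    (fun t => hasDerivAt_pi.2 fun i => hX t i j) (fun t => hasDerivAt_pi.2 fun i => hZ t i j)
    (by funext i; simp [h0]) s
  exact congrFun this i

end Helpers

/-- Entrywise differentiation of `B * X * C`. -/
theorem hasDerivAt_mul_mul_entry {ι : Type} [Fintype ι] [DecidableEq ι] (B C : Matrix ι ι ℝ)
    (X : ℝ → Matrix ι ι ℝ) (X' : Matrix ι ι ℝ) (t : ℝ)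
    (hX : ∀ i j, HasDerivAt (fun u => X u i j) (X' i j) t) (i j : ι) :
    HasDerivAt (fun u => (B * X u * C) i j) ((B * X' * C) i j) t := by
  simp only [Matrix.mul_apply]
  refine HasDerivAt.fun_sum fun k _ => ?_
  refine HasDerivAt.mul_const ?_ _
  exact HasDerivAt.fun_sum fun l _ => (hX l k).const_mul _

theorem differentiable_fderiv_apply {ι : Type} [Fintype ι] [DecidableEq ι]
    (f : (ι → ℝ) → ℝ) (hf : ContDiff ℝ 2 f) (v : ι → ℝ) :
    ContDiff ℝ 1 (fun y => fderiv ℝ f y v) :=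
  (hf.fderiv_right (m := 1) (by norm_num)).clm_apply contDiff_const

theorem continuous_hessM {ι : Type} [Fintype ι] [DecidableEq ι]
    (f : (ι → ℝ) → ℝ) (hf : ContDiff ℝ 2 f) : Continuous (hessM f) := by
  refine continuous_matrix fun i j => ?_
  exact ((differentiable_fderiv_apply f hf (Pi.single j 1)).continuous_fderiv (by norm_num)).clm_apply
    continuous_const

theorem hessM_apply {ι : Type} [Fintype ι] [DecidableEq ι]
    (f : (ι → ℝ) → ℝ) (hf : ContDiff ℝ 2 f) (x : ι → ℝ) (u v : ι → ℝ) :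
    fderiv ℝ (fun y => fderiv ℝ f y v) x u = ∑ k, ∑ l, u k * hessM f x k l * v l := by
  have hd : DifferentiableAt ℝ (fderiv ℝ f) x :=
    ((hf.fderiv_right (m := 1) (by norm_num)).differentiable (by norm_num)) x
  have key : ∀ w z, fderiv ℝ (fun y => fderiv ℝ f y w) x z = fderiv ℝ (fderiv ℝ f) x z w := by
    intro w z
    rw [fderiv_clm_apply hd (differentiableAt_const w)]
    simp
  simp only [hessM, Matrix.of_apply, key]
  conv_lhs => rw [pi_eq_sum_univ' u, pi_eq_sum_univ' v]
  simp only [map_sum, map_smul, _root_.sum_apply, _root_.smul_apply,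
    smul_eq_mul, Finset.mul_sum]
  rw [Finset.sum_comm]
  refine Finset.sum_congr rfl fun k _ => Finset.sum_congr rfl fun l _ => ?_
  ring

theorem hessM_symm {ι : Type} [Fintype ι] [DecidableEq ι]
    (f : (ι → ℝ) → ℝ) (hf : ContDiff ℝ 2 f) (S : Matrix ι ι ℝ)
    (hS : ∀ x, f (S.mulVec x) = f x) (x : ι → ℝ) :
    Sᵀ * hessM f (S.mulVec x) * S = hessM f x := by
  set L : (ι → ℝ) →L[ℝ] (ι → ℝ) := LinearMap.toContinuousLinearMap (Matrix.mulVecLin S) with hL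
  have hLa : ∀ v, L v = S.mulVec v := fun v => rfl
  have h1 : ∀ y v, fderiv ℝ f y v = fderiv ℝ f (L y) (L v) := by
    intro y v
    have hc : f = f ∘ L := by funext z; simp [hLa, hS]
    have hd : HasFDerivAt (f ∘ L) ((fderiv ℝ f (L y)).comp L) y :=
      ((hf.differentiable (by norm_num)) (L y)).hasFDerivAt.comp y L.hasFDerivAt
    rw [← hc] at hd
    rw [hd.fderiv]; rfl
  ext i j
  have h2 : hessM f x i j = fderiv ℝ (fun z => fderiv ℝ f z (L (Pi.single j 1))) (L x)
      (L (Pi.single i 1)) := by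
    have hd : HasFDerivAt ((fun z => fderiv ℝ f z (L (Pi.single j 1))) ∘ L) _ x :=
      (((differentiable_fderiv_apply f hf (L (Pi.single j 1))).differentiable
        (by norm_num)) (L x)).hasFDerivAt.comp x L.hasFDerivAt
    have he : (fun y => fderiv ℝ f y (Pi.single j 1)) =
        (fun z => fderiv ℝ f z (L (Pi.single j 1))) ∘ L := by
      funext y; exact h1 y _
    simp only [hessM, Matrix.of_apply]
    rw [he, hd.fderiv]; rfl
  rw [h2, hessM_apply f hf, hLa, hLa, hLa]
  simp only [Matrix.mul_apply, Matrix.mulVec_single_one, Matrix.col_apply, Matrix.transpose_apply,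
    Finset.sum_mul]
  rw [Finset.sum_comm]

/-- Roberts' remark for non-identity initial conditions (time-preserving case): if `Y` solves
the linearization along `γ` with `Y(0) = Y₀` invertible, then
`Y(s + T/N) = S Y(s) Y₀⁻¹ Sᵀ Y(T/N)` for all `s`, and consequently
`Y(kT/N) = Sᵏ Y₀ (Y₀⁻¹ Sᵀ Y(T/N))ᵏ` for every `k ∈ ℕ`. -/
theorem roberts_time_preserving_general (n N : ℕ) (hn : 1 ≤ n) (hN : 1 ≤ N) (T : ℝ) (hT : 0 < T)
    (Γ : ((Fin n ⊕ Fin n) → ℝ) → ℝ) (hΓ : ContDiff ℝ 2 Γ)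
    (γ : ℝ → (Fin n ⊕ Fin n) → ℝ)
    (hsol : ∀ s : ℝ, HasDerivAt γ ((stdJ n).mulVec (gradV Γ (γ s))) s)
    (hper : ∀ s : ℝ, γ (s + T) = γ s)
    (S : Matrix (Fin n ⊕ Fin n) (Fin n ⊕ Fin n) ℝ)
    (hsym : ∀ s : ℝ, γ (s + T / N) = S.mulVec (γ s))
    (hSinv : ∀ x, Γ (S.mulVec x) = Γ x)
    (hSJ : S * stdJ n = stdJ n * S)
    (horth : Sᵀ * S = 1)
    (Y₀ : Matrix (Fin n ⊕ Fin n) (Fin n ⊕ Fin n) ℝ) (hY₀ : IsUnit Y₀)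
    (Y : ℝ → Matrix (Fin n ⊕ Fin n) (Fin n ⊕ Fin n) ℝ)
    (hY0 : Y 0 = Y₀)
    (hY : ∀ (s : ℝ) (i j : Fin n ⊕ Fin n),
      HasDerivAt (fun u => Y u i j) ((stdJ n * hessM Γ (γ s) * Y s) i j) s) :
    (∀ s : ℝ, Y (s + T / N) = S * Y s * Y₀⁻¹ * Sᵀ * Y (T / N)) ∧
    (∀ k : ℕ, Y ((k : ℝ) * T / N) = S ^ k * Y₀ * (Y₀⁻¹ * Sᵀ * Y (T / N)) ^ k) := by
  have hSS : S * Sᵀ = 1 := mul_eq_one_comm.1 horth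
  have hdet : IsUnit Y₀.det := (Matrix.isUnit_iff_isUnit_det _).1 hY₀
  have hγ : Continuous γ := continuous_iff_continuousAt.2 fun s => (hsol s).continuousAt
  have hcomm : Sᵀ * stdJ n = stdJ n * Sᵀ := by
    calc Sᵀ * stdJ n = Sᵀ * (stdJ n * S) * Sᵀ := by
          rw [Matrix.mul_assoc, Matrix.mul_assoc, hSS, Matrix.mul_one]
      _ = stdJ n * Sᵀ := by
          rw [← hSJ, ← Matrix.mul_assoc, horth, Matrix.one_mul]
  have hA : Continuous fun s => stdJ n * hessM Γ (γ s) :=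
    continuous_const.matrix_mul ((continuous_hessM Γ hΓ).comp hγ)
  have main : ∀ s : ℝ, Y (s + T / N) = S * Y s * Y₀⁻¹ * Sᵀ * Y (T / N) := by
    intro s
    have hu := linODE_matrix_unique (fun s => stdJ n * hessM Γ (γ s)) hA
      (fun s => Sᵀ * Y (s + T / N) * 1) (fun s => 1 * Y s * (Y₀⁻¹ * Sᵀ * Y (T / N)))
      (by
        intro t i j
        have := hasDerivAt_mul_mul_entry Sᵀ 1 (fun u => Y (u + T / N)) _ t
          (fun i j => (hY (t + T / N) i j).comp_add_const t (T / N)) i j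
        refine this.congr_deriv (congrFun (congrFun (Eq.symm ?_) i) j)
        rw [hsym, ← hessM_symm Γ hΓ S hSinv (γ t)]
        simp only [Matrix.mul_one]
        calc stdJ n * (Sᵀ * hessM Γ (S.mulVec (γ t)) * S) * (Sᵀ * Y (t + T / N))
            = (stdJ n * Sᵀ) * hessM Γ (S.mulVec (γ t)) * (S * Sᵀ) * Y (t + T / N) := by
              simp only [Matrix.mul_assoc]
          _ = _ := by rw [hSS, ← hcomm]; simp only [Matrix.mul_assoc, Matrix.mul_one, Matrix.one_mul])
      (by
        intro t i j
        have := hasDerivAt_mul_mul_entry 1 (Y₀⁻¹ * Sᵀ * Y (T / N)) Y _ t (hY t) i j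
        refine this.congr_deriv (congrFun (congrFun (Eq.symm ?_) i) j)
        simp only [Matrix.mul_assoc, Matrix.one_mul]
        rfl)
      (by
        simp only [zero_add, hY0, Matrix.mul_one, Matrix.one_mul, ← Matrix.mul_assoc]
        rw [Matrix.mul_nonsing_inv _ hdet, Matrix.one_mul]) s
    simp only [Matrix.mul_one, Matrix.one_mul] at hu
    calc Y (s + T / N) = S * (Sᵀ * Y (s + T / N)) := by
          rw [← Matrix.mul_assoc, hSS, Matrix.one_mul]
      _ = _ := by rw [hu]; simp only [Matrix.mul_assoc]
  refine ⟨main, fun k => ?_⟩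
  induction k with
  | zero => simp [hY0]
  | succ k ih =>
    have : ((k + 1 : ℕ) : ℝ) * T / N = (k : ℝ) * T / N + T / N := by push_cast; ring
    rw [this, main, ih, pow_succ' S, pow_succ (Y₀⁻¹ * Sᵀ * Y (T / N))]
    simp only [Matrix.mul_assoc]
end

section
/- Let γ be a T-periodic solution of the Hamiltonian system ẋ = J∇Γ(x) and let S be a 2n×2n real orthogonal matrix with SJ = −JS, Γ(Sx) = Γ(x) for all x, and γ(−s + T/N) = S γ(s) for all s, for some N ∈ ℕ, N ≥ 1. Let Y : ℝ → M_{2n}(ℝ) satisfy Y′(s) = J·D²Γ(γ(s))·Y(s) with Y(0) = Y₀ invertible. Then Y(−s + T/N) = S Y(s) Y₀⁻¹ Sᵀ Y(T/N) for all s, and consequently Y(T/N) = S Y₀ B⁻¹ Sᵀ B, where B = Y(T/(2N)). -/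
open Matrix

section UniqHelpers

attribute [local instance] Matrix.linftyOpNormedAddCommGroup

/-- A solution of a linear ODE with continuous coefficients vanishing somewhere vanishes. -/
theorem lin_ode_zero {ι : Type} [Fintype ι] [DecidableEq ι] (A : ℝ → Matrix ι ι ℝ)
    (hA : Continuous A) (y : ℝ → ι → ℝ) (hy : ∀ s, HasDerivAt y (A s *ᵥ y s) s)
    (t₀ : ℝ) (h0 : y t₀ = 0) (t : ℝ) : y t = 0 := by
  obtain ⟨a, b, Ht, Ht₀⟩ : ∃ a b, t ∈ Set.Ioo a b ∧ t₀ ∈ Set.Ioo a b := by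
    refine ⟨min t t₀ - 1, max t t₀ + 1, ?_, ?_⟩ <;> constructor <;> grind
  obtain ⟨C, hC⟩ := (isCompact_Icc (a := a) (b := b)).exists_bound_of_continuousOn hA.continuousOn
  have hL : ∀ s ∈ Set.Ioo a b, LipschitzOnWith (Real.toNNReal C) (fun x => A s *ᵥ x) Set.univ := by
    intro s hs
    have hCs := hC s (Set.Ioo_subset_Icc_self hs)
    have hC0 : 0 ≤ C := (norm_nonneg _).trans hCs
    refine LipschitzOnWith.of_dist_le_mul fun x _ z _ => ?_
    rw [dist_eq_norm, dist_eq_norm, ← Matrix.mulVec_sub, Real.coe_toNNReal _ hC0]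
    exact (Matrix.linfty_opNorm_mulVec _ _).trans
      (mul_le_mul_of_nonneg_right hCs (norm_nonneg _))
  have := ODE_solution_unique_of_mem_Ioo (v := fun s x => A s *ᵥ x) (s := fun _ => Set.univ)
    (f := y) (g := fun _ => 0) hL Ht₀ (fun s _ => ⟨hy s, trivial⟩)
    (fun s _ => ⟨by simpa using hasDerivAt_const s (0 : ι → ℝ), trivial⟩) h0 Ht
  exact this

end UniqHelpers

/-- Matrix version. -/
theorem lin_ode_zero_mat {ι κ : Type} [Fintype ι] [DecidableEq ι] (A : ℝ → Matrix ι ι ℝ)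
    (hA : Continuous A) (Z : ℝ → Matrix ι κ ℝ)
    (hZ : ∀ s i j, HasDerivAt (fun u => Z u i j) ((A s * Z s) i j) s)
    (t₀ : ℝ) (h0 : Z t₀ = 0) (t : ℝ) : Z t = 0 := by
  ext i j
  have := lin_ode_zero A hA (fun u k => Z u k j) (fun s => by
    rw [hasDerivAt_pi]
    intro k
    exact hZ s k j) t₀ (by ext k; simp [h0]) t
  exact congrFun this i

/-- Derivative of left and right multiplication by constant matrices, entrywise. -/
theorem hasDerivAt_mul_const_mat {ι κ μ : Type} [Fintype κ] (Z : ℝ → Matrix ι κ ℝ)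
    (Z' : Matrix ι κ ℝ) (s : ℝ) (h : ∀ i j, HasDerivAt (fun u => Z u i j) (Z' i j) s)
    (M : Matrix κ μ ℝ) (i : ι) (j : μ) :
    HasDerivAt (fun u => (Z u * M) i j) ((Z' * M) i j) s := by
  simp only [Matrix.mul_apply]
  exact HasDerivAt.fun_sum fun k _ => (h i k).mul_const _

theorem hasDerivAt_const_mul_mat {ι κ μ : Type} [Fintype κ] (Z : ℝ → Matrix κ μ ℝ)
    (Z' : Matrix κ μ ℝ) (s : ℝ) (h : ∀ i j, HasDerivAt (fun u => Z u i j) (Z' i j) s)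
    (M : Matrix ι κ ℝ) (i : ι) (j : μ) :
    HasDerivAt (fun u => (M * Z u) i j) ((M * Z') i j) s := by
  simp only [Matrix.mul_apply]
  exact HasDerivAt.fun_sum fun k _ => (h k j).const_mul _

section Hess

variable {ι : Type} [Fintype ι] [DecidableEq ι]

theorem hessM_apply' (f : (ι → ℝ) → ℝ) (hf : ContDiff ℝ 2 f) (x : ι → ℝ) (i j : ι) :
    hessM f x i j = fderiv ℝ (fderiv ℝ f) x (Pi.single i 1) (Pi.single j 1) := by
  have hd : Differentiable ℝ (fderiv ℝ f) :=
    (hf.fderiv_right (m := 1) (by norm_num)).differentiable (by norm_num)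
  simp only [hessM, Matrix.of_apply]
  rw [fderiv_clm_apply (hd x) (differentiableAt_const _)]
  simp

theorem hessM_continuous (f : (ι → ℝ) → ℝ) (hf : ContDiff ℝ 2 f) : Continuous (hessM f) := by
  have hc : Continuous (fderiv ℝ (fderiv ℝ f)) :=
    (hf.fderiv_right (m := 1) (by norm_num)).continuous_fderiv (by norm_num)
  refine continuous_matrix fun i j => ?_
  simp only [hessM_apply' f hf]
  fun_prop

theorem bilin_expand (B : (ι → ℝ) →L[ℝ] (ι → ℝ) →L[ℝ] ℝ) (u w : ι → ℝ) :
    B u w = ∑ k, ∑ l, u k * B (Pi.single k 1) (Pi.single l 1) * w l := by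
  conv_lhs => rw [pi_eq_sum_univ' u, pi_eq_sum_univ' w]
  simp only [map_sum, map_smul, ContinuousLinearMap.sum_apply, ContinuousLinearMap.smul_apply,
    smul_eq_mul, Finset.mul_sum]
  rw [Finset.sum_comm]
  refine Finset.sum_congr rfl fun k _ => Finset.sum_congr rfl fun l _ => ?_
  have h : ∀ m : ι, (fun j => if m = j then (1 : ℝ) else 0) = Pi.single m 1 := by
    intro m; ext j; simp [Pi.single_apply, eq_comm]
  ring_nf

theorem hessM_conj (f : (ι → ℝ) → ℝ) (hf : ContDiff ℝ 2 f) (S : Matrix ι ι ℝ)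
    (hS : ∀ x, f (S *ᵥ x) = f x) (x : ι → ℝ) :
    hessM f x = Sᵀ * hessM f (S *ᵥ x) * S := by
  have hd1 : Differentiable ℝ f := hf.differentiable (by norm_num)
  have hd : Differentiable ℝ (fderiv ℝ f) :=
    (hf.fderiv_right (m := 1) (by norm_num)).differentiable (by norm_num)
  let L : (ι → ℝ) →L[ℝ] (ι → ℝ) := LinearMap.toContinuousLinearMap (Matrix.mulVecLin S)
  have hL : ∀ v, L v = S *ᵥ v := fun v => rfl
  have h1 : ∀ y w, fderiv ℝ f y w = fderiv ℝ f (L y) (L w) := by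
    intro y w
    have e : f = f ∘ L := by ext z; exact (hS z).symm
    have := fderiv_comp y (hd1 (L y)) (L.differentiableAt (x := y))
    rw [← e, L.fderiv] at this
    rw [this]; rfl
  have h2 : ∀ u w, fderiv ℝ (fderiv ℝ f) x u w = fderiv ℝ (fderiv ℝ f) (L x) (L u) (L w) := by
    intro u w
    have e : (fun y => fderiv ℝ f y w) = fun y => fderiv ℝ f (L y) (L w) := by
      ext y; exact h1 y w
    have a1 : HasFDerivAt (fun y => fderiv ℝ f y w)
        ((fderiv ℝ (fderiv ℝ f) x).flip w) x := by
      simpa using (hd x).hasFDerivAt.clm_apply (hasFDerivAt_const w x)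
    have a2 : HasFDerivAt (fun y => fderiv ℝ f (L y) (L w))
        (((fderiv ℝ (fderiv ℝ f) (L x)).comp L).flip (L w)) x := by
      have := ((hd (L x)).hasFDerivAt.comp x L.hasFDerivAt).clm_apply (hasFDerivAt_const (L w) x)
      simpa using this
    rw [e] at a1
    have := a1.unique a2
    simpa using congrArg (fun M => M u) this
  ext i j
  rw [hessM_apply' f hf, h2, bilin_expand]
  simp only [Matrix.mul_apply, hL, ← hessM_apply' f hf, Finset.sum_mul]
  rw [Finset.sum_comm]
  simp

end Hess

/-- Roberts' remark for non-identity initial conditions (time-reversing case): if `Y` solves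
the linearization along `γ` with `Y(0) = Y₀` invertible, then
`Y(−s + T/N) = S Y(s) Y₀⁻¹ Sᵀ Y(T/N)` for all `s`, and consequently
`Y(T/N) = S Y₀ B⁻¹ Sᵀ B` with `B = Y(T/(2N))`. -/
theorem roberts_time_reversing_general (n N : ℕ) (hn : 1 ≤ n) (hN : 1 ≤ N) (T : ℝ) (hT : 0 < T)
    (Γ : ((Fin n ⊕ Fin n) → ℝ) → ℝ) (hΓ : ContDiff ℝ 2 Γ)
    (γ : ℝ → (Fin n ⊕ Fin n) → ℝ)
    (hsol : ∀ s : ℝ, HasDerivAt γ ((stdJ n).mulVec (gradV Γ (γ s))) s)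
    (hper : ∀ s : ℝ, γ (s + T) = γ s)
    (S : Matrix (Fin n ⊕ Fin n) (Fin n ⊕ Fin n) ℝ)
    (hsym : ∀ s : ℝ, γ (-s + T / N) = S.mulVec (γ s))
    (hSinv : ∀ x, Γ (S.mulVec x) = Γ x)
    (hSJ : S * stdJ n = -(stdJ n * S))
    (horth : Sᵀ * S = 1)
    (Y₀ : Matrix (Fin n ⊕ Fin n) (Fin n ⊕ Fin n) ℝ) (hY₀ : IsUnit Y₀)
    (Y : ℝ → Matrix (Fin n ⊕ Fin n) (Fin n ⊕ Fin n) ℝ)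
    (hY0 : Y 0 = Y₀)
    (hY : ∀ (s : ℝ) (i j : Fin n ⊕ Fin n),
      HasDerivAt (fun u => Y u i j) ((stdJ n * hessM Γ (γ s) * Y s) i j) s) :
    (∀ s : ℝ, Y (-s + T / N) = S * Y s * Y₀⁻¹ * Sᵀ * Y (T / N)) ∧
    Y (T / N) = S * Y₀ * (Y (T / (2 * N)))⁻¹ * Sᵀ * Y (T / (2 * N)) := by
  have hdet : S * Sᵀ = 1 := mul_eq_one_comm.mp horth
  have hYdet : IsUnit Y₀.det := (Matrix.isUnit_iff_isUnit_det _).mp hY₀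
  set A : ℝ → Matrix (Fin n ⊕ Fin n) (Fin n ⊕ Fin n) ℝ := fun s => stdJ n * hessM Γ (γ s) with hAdef
  have hγ : Continuous γ := continuous_iff_continuousAt.mpr fun s => (hsol s).continuousAt
  have hA : Continuous A := by
    exact continuous_const.matrix_mul ((hessM_continuous Γ hΓ).comp hγ)
  have hconj : ∀ s, -(Sᵀ * A (-s + T / N)) = A s * Sᵀ := by
    intro s
    have h := hessM_conj Γ hΓ S hSinv (γ s)
    have hJ : Sᵀ * stdJ n = -(stdJ n * Sᵀ) := by
      calc Sᵀ * stdJ n = Sᵀ * (stdJ n * S) * Sᵀ := by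
            rw [Matrix.mul_assoc, Matrix.mul_assoc, hdet, Matrix.mul_one]
        _ = Sᵀ * (-(S * stdJ n)) * Sᵀ := by rw [hSJ, neg_neg]
        _ = -((Sᵀ * S) * stdJ n * Sᵀ) := by
            simp only [Matrix.mul_neg, Matrix.neg_mul, Matrix.mul_assoc]
        _ = _ := by rw [horth, Matrix.one_mul]
    simp only [hAdef]
    rw [hsym s, h, ← Matrix.mul_assoc, hJ]
    simp only [Matrix.neg_mul, neg_neg, Matrix.mul_assoc, hdet, Matrix.mul_one]
  have hW : ∀ s i j, HasDerivAt (fun u => Y (-u + T / N) i j)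
      ((-(A (-s + T / N) * Y (-s + T / N))) i j) s := by
    intro s i j
    have h1 : HasDerivAt (fun u : ℝ => -u + T / N) (-1) s :=
      ((hasDerivAt_id s).neg).add_const _
    have := (hY (-s + T / N) i j).comp s h1
    simp only [mul_neg, mul_one] at this
    exact this
  have key : ∀ s, Sᵀ * Y (-s + T / N) = Y s * (Y₀⁻¹ * Sᵀ * Y (T / N)) := by
    intro s
    rw [← sub_eq_zero]
    refine lin_ode_zero_mat A hA
      (fun s => Sᵀ * Y (-s + T / N) - Y s * (Y₀⁻¹ * Sᵀ * Y (T / N))) ?_ 0 ?_ s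
    · intro s i j
      have h1 := hasDerivAt_const_mul_mat _ _ s (hW s) Sᵀ i j
      have h2 := hasDerivAt_mul_const_mat _ _ s (hY s) (Y₀⁻¹ * Sᵀ * Y (T / N)) i j
      have e : A s * (Sᵀ * Y (-s + T / N) - Y s * (Y₀⁻¹ * Sᵀ * Y (T / N))) =
          Sᵀ * -(A (-s + T / N) * Y (-s + T / N)) -
            stdJ n * hessM Γ (γ s) * Y s * (Y₀⁻¹ * Sᵀ * Y (T / N)) := by
        rw [Matrix.mul_sub, ← Matrix.mul_assoc, ← hconj s]
        simp only [hAdef, Matrix.neg_mul, Matrix.mul_neg, Matrix.mul_assoc]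
      rw [e]
      exact h1.sub h2
    · simp only [neg_zero, zero_add, hY0]
      rw [← Matrix.mul_assoc, ← Matrix.mul_assoc, Matrix.mul_nonsing_inv _ hYdet, Matrix.one_mul,
        sub_self]
  have main : ∀ s : ℝ, Y (-s + T / N) = S * Y s * Y₀⁻¹ * Sᵀ * Y (T / N) := by
    intro s
    calc Y (-s + T / N) = S * (Sᵀ * Y (-s + T / N)) := by
          rw [← Matrix.mul_assoc, hdet, Matrix.one_mul]
      _ = _ := by rw [key s]; simp only [Matrix.mul_assoc]
  refine ⟨main, ?_⟩
  set B := Y (T / (2 * N)) with hB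
  have hBdet : IsUnit B.det := by
    rw [isUnit_iff_ne_zero]
    intro h
    obtain ⟨v, hv, hv0⟩ := Matrix.exists_mulVec_eq_zero_iff.mpr h
    have hz := lin_ode_zero A hA (fun u => Y u *ᵥ v) (fun s => by
      rw [hasDerivAt_pi]
      intro i
      rw [Matrix.mulVec_mulVec]
      simp only [Matrix.mulVec, dotProduct]
      exact HasDerivAt.fun_sum fun k _ => (hY s i k).mul_const _) (T / (2 * N)) hv0 0
    simp only [hY0] at hz
    apply hYdet.ne_zero
    exact Matrix.exists_mulVec_eq_zero_iff.mp ⟨v, hv, hz⟩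
  have hN0 : (N : ℝ) ≠ 0 := by positivity
  have hm := main (T / (2 * N))
  rw [show -(T / (2 * N)) + T / N = T / (2 * (N : ℝ)) by field_simp; ring, ← hB] at hm
  calc Y (T / N) = S * Y₀ * B⁻¹ * Sᵀ * (S * B * Y₀⁻¹ * Sᵀ * Y (T / N)) := by
        have e : S * Y₀ * B⁻¹ * Sᵀ * (S * B * Y₀⁻¹ * Sᵀ * Y (T / N)) =
          S * (Y₀ * (B⁻¹ * ((Sᵀ * S) * B) * Y₀⁻¹)) * Sᵀ * Y (T / N) := by
          simp only [Matrix.mul_assoc]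
        rw [e, horth, Matrix.one_mul, Matrix.nonsing_inv_mul _ hBdet, Matrix.one_mul,
          Matrix.mul_nonsing_inv _ hYdet, Matrix.mul_one, hdet, Matrix.one_mul]
    _ = _ := by rw [← hm]
end
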